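/- Let S be a finite set of n-qubit Pauli operators and let T ⊆ S be the subset obtained by removing from S every operator that commutes with all other operators in S. Then S is noncontextual if and only if the relation of commutation is an equivalence relation on T. -/

import Mathlib

/-!
The proof rests on two facts about Pauli operators: they are involutions, and any two of them either
commute or anticommute; moreover a product of two *commuting* Pauli operators is again a Pauli
operator (`IsPauli.mul_self`, `IsPauli.commute_or_anti`, `IsPauli.mul`).

*Equivalence implies noncontextual.* If commutation is an equivalence relation on `T`, elements of
different classes anticommute. Choose a representative in each class. For `s ∈ T` with representative
`r`, the operator `s * r` commutes with all of `S`, so every `s ∈ S` factors as `s = ν s * r` with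
`ν s` central in the monoid generated by `S`, `ν s ^ 2 = 1`, and `r` either `1` or a representative.
Distinct representatives anticommute, so commuting products never leave the set of operators
`z * r` with `z` central, and the central part of the root label of a determining tree is the
product of `ν` over the leaves. This product depends only on the determining set
(`prod_map_eq_of_parity`). Hence determining trees for `A` and `-A` with the same determining set
would give two elements `r` and `-r` of the set of representatives (with `1` adjoined), which is
impossible. Here `ν` plays the role of a noncontextual value assignment, with values in an abelian
group instead of `±1`.

*Noncontextual implies equivalence.* If transitivity fails there are `A, B, C, D ∈ S` with `B`
commuting with `A` and `C`, while `A, C` anticommute and `B, D` anticommute. According to whether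
`D` commutes with both, one or none of `A` and `C`, explicit determining trees of opposite sign exist
(`contextual_of_square`, `contextual_of_path`, `contextual_of_cherry`); the first case is the
Peres–Mermin square.
-/

open Matrix

/-- Index type for `n` qubits: `Fin n → Fin 2` has cardinality `2^n`. -/
abbrev QubitIdx (n : ℕ) := Fin n → Fin 2

/-- `2^n × 2^n` complex matrices. -/
abbrev Mat (n : ℕ) := Matrix (QubitIdx n) (QubitIdx n) ℂ

/-- The four single-qubit Pauli matrices `I, X, Y, Z`. -/
noncomputable def pauliMat : Fin 4 → Matrix (Fin 2) (Fin 2) ℂ :=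
  ![1, !![0, 1; 1, 0], !![0, -Complex.I; Complex.I, 0], !![1, 0; 0, -1]]

/-- The tensor product `P₁ ⊗ ⋯ ⊗ Pₙ` of single-qubit Pauli matrices. -/
noncomputable def pauliTensor (n : ℕ) (f : Fin n → Fin 4) : Mat n :=
  fun i k => ∏ j, pauliMat (f j) (i j) (k j)

/-- An `n`-qubit Pauli operator: `ε • P₁ ⊗ ⋯ ⊗ Pₙ` with `ε ∈ {1, -1}`. -/
def IsPauli (n : ℕ) (M : Mat n) : Prop :=
  ∃ (ε : ℂ) (f : Fin n → Fin 4), (ε = 1 ∨ ε = -1) ∧ M = ε • pauliTensor n f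

/-- Two operators anticommute. -/
def PAntiCommute {n : ℕ} (A B : Mat n) : Prop := A * B = -(B * A)

/-- Finite rooted trees whose nodes are labeled by `2^n × 2^n` matrices.
A `leaf` has no children; a `node` has a (finite) list of children. -/
inductive PTree (n : ℕ) : Type
  | leaf : Mat n → PTree n
  | node : Mat n → List (PTree n) → PTree n

namespace PTree

variable {n : ℕ}

/-- The label of the root of the tree. -/
def label : PTree n → Mat n
  | leaf M => M
  | node M _ => M

mutual
/-- The multiset of leaf labels of the tree. -/
def leaves : PTree n → Multiset (Mat n)
  | .leaf M => {M}
  | .node _ cs => leavesList cs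
/-- The multiset of leaf labels of a list of trees. -/
def leavesList : List (PTree n) → Multiset (Mat n)
  | [] => 0
  | c :: cs => c.leaves + leavesList cs
end

mutual
/-- The list of leaf labels of the tree in depth-first (left-to-right) order. -/
def leafList : PTree n → List (Mat n)
  | .leaf M => [M]
  | .node _ cs => leafListList cs
/-- The list of leaf labels of a list of trees, in depth-first order. -/
def leafListList : List (PTree n) → List (Mat n)
  | [] => []
  | c :: cs => c.leafList ++ leafListList cs
end

mutual
/-- The multiset of all node labels of the tree. -/
def nodeLabels : PTree n → Multiset (Mat n)
  | .leaf M => {M}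
  | .node M cs => M ::ₘ nodeLabelsList cs
/-- The multiset of all node labels of a list of trees. -/
def nodeLabelsList : List (PTree n) → Multiset (Mat n)
  | [] => 0
  | c :: cs => c.nodeLabels + nodeLabelsList cs
end

/-- The multiset of labels of all nodes at depth ≥ 2, i.e. strictly below
the children of the root. -/
def deepLabels : PTree n → Multiset (Mat n)
  | .leaf _ => 0
  | .node _ cs => (cs.map fun c =>
      match c with
      | .leaf _ => (0 : Multiset (Mat n))
      | .node _ cs' => nodeLabelsList cs').sum

/-- A valid determining tree over a set `S`: every leaf is labeled by an
element of `S`, every node is labeled by a Pauli operator, and for every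
internal node, the labels of its children pairwise commute and the label of
the node is the matrix product of the labels of its children. -/
inductive Valid (S : Set (Mat n)) : PTree n → Prop
  | leaf {M : Mat n} : M ∈ S → Valid S (PTree.leaf M)
  | node {M : Mat n} {cs : List (PTree n)} :
      IsPauli n M →
      M = (cs.map label).prod →
      cs.Pairwise (fun a b => Commute a.label b.label) →
      (∀ c ∈ cs, Valid S c) →
      Valid S (PTree.node M cs)

/-- Every internal node of the tree has at most two children. -/
inductive Binary : PTree n → Prop
  | leaf (M : Mat n) : Binary (PTree.leaf M)
  | node (M : Mat n) (cs : List (PTree n)) :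
      cs.length ≤ 2 → (∀ c ∈ cs, Binary c) → Binary (PTree.node M cs)

open scoped Classical in
/-- The determining set of a tree: the set of operators occurring with odd
total multiplicity among its leaves. -/
noncomputable def detSet (τ : PTree n) : Set (Mat n) :=
  {M | Odd (τ.leaves.count M)}

end PTree

/-- `τ` is a determining tree for `A` over `S`. -/
def IsDetTree {n : ℕ} (S : Set (Mat n)) (A : Mat n) (τ : PTree n) : Prop :=
  PTree.Valid S τ ∧ τ.label = A

/-- A set `S` of Pauli operators is contextual if for some Pauli operator `A`
there are determining trees for `A` and for `-A` over `S` with identical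
determining sets. -/
def Contextual (n : ℕ) (S : Set (Mat n)) : Prop :=
  ∃ (A : Mat n) (τ τ' : PTree n), IsPauli n A ∧
    IsDetTree S A τ ∧ IsDetTree S (-A) τ' ∧ τ.detSet = τ'.detSet

/-! ### Algebra of Pauli operators -/

lemma pauliMat_mul (a b : Fin 4) :
    ∃ (c : ℂ) (d : Fin 4), c ^ 4 = 1 ∧ pauliMat a * pauliMat b = c • pauliMat d := by
  have h4 : Complex.I ^ 4 = 1 := Complex.I_pow_four
  have h4' : (-Complex.I) ^ 4 = 1 := by rw [neg_pow, h4]; norm_num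
  fin_cases a <;> fin_cases b
  · exact ⟨1, 0, by norm_num, by simp [pauliMat]⟩
  · exact ⟨1, 1, by norm_num, by simp [pauliMat]⟩
  · exact ⟨1, 2, by norm_num, by simp [pauliMat]⟩
  · exact ⟨1, 3, by norm_num, by simp [pauliMat]⟩
  · exact ⟨1, 1, by norm_num, by simp [pauliMat]⟩
  · exact ⟨1, 0, by norm_num, by simp [pauliMat, Matrix.one_fin_two]⟩
  · exact ⟨Complex.I, 3, h4, by simp [pauliMat]⟩
  · exact ⟨-Complex.I, 2, h4', by simp [pauliMat]⟩
  · exact ⟨1, 2, by norm_num, by simp [pauliMat]⟩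
  · exact ⟨-Complex.I, 3, h4', by simp [pauliMat]⟩
  · exact ⟨1, 0, by norm_num, by simp [pauliMat, Matrix.one_fin_two]⟩
  · exact ⟨Complex.I, 1, h4, by simp [pauliMat]⟩
  · exact ⟨1, 3, by norm_num, by simp [pauliMat]⟩
  · exact ⟨Complex.I, 2, h4, by simp [pauliMat]⟩
  · exact ⟨-Complex.I, 1, h4', by simp [pauliMat]⟩
  · exact ⟨1, 0, by norm_num, by simp [pauliMat, Matrix.one_fin_two]⟩

lemma pauliMat_mul_self (a : Fin 4) : pauliMat a * pauliMat a = 1 := by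
  fin_cases a <;> simp [pauliMat, Matrix.one_fin_two]

lemma pauliTensor_mul_apply {n : ℕ} (f g : Fin n → Fin 4) (i k : QubitIdx n) :
    (pauliTensor n f * pauliTensor n g) i k
      = ∏ j, (pauliMat (f j) * pauliMat (g j)) (i j) (k j) := by
  simp only [Matrix.mul_apply, pauliTensor]
  rw [Finset.prod_univ_sum, Fintype.piFinset_univ]
  simp only [Finset.prod_mul_distrib]

lemma pauliTensor_mul_self {n : ℕ} (f : Fin n → Fin 4) :
    pauliTensor n f * pauliTensor n f = 1 := by
  ext i k
  rw [pauliTensor_mul_apply]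
  simp only [pauliMat_mul_self, Matrix.one_apply]
  rw [Finset.prod_ite_zero]
  simp [funext_iff]

lemma pauliTensor_mul {n : ℕ} (f g : Fin n → Fin 4) :
    ∃ (c : ℂ) (h : Fin n → Fin 4), c ^ 4 = 1 ∧
      pauliTensor n f * pauliTensor n g = c • pauliTensor n h := by
  choose c h hc hm using fun j => pauliMat_mul (f j) (g j)
  refine ⟨∏ j, c j, h, ?_, ?_⟩
  · rw [← Finset.prod_pow]; simp [hc]
  · ext i k
    rw [pauliTensor_mul_apply]
    simp [hm, pauliTensor, Finset.prod_mul_distrib]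

lemma mat_one_ne_neg_one {n : ℕ} : (1 : Mat n) ≠ -1 := by
  intro h
  have := congrFun (congrFun h 0) 0
  norm_num at this

lemma IsPauli.mul_self {n : ℕ} {P : Mat n} (hP : IsPauli n P) : P * P = 1 := by
  obtain ⟨ε, f, hε, rfl⟩ := hP
  rw [smul_mul_smul_comm, pauliTensor_mul_self]
  rcases hε with rfl | rfl <;> simp

lemma IsPauli.mul_exists {n : ℕ} {P Q : Mat n} (hP : IsPauli n P) (hQ : IsPauli n Q) :
    ∃ (c : ℂ) (h : Fin n → Fin 4), c ^ 4 = 1 ∧ P * Q = c • pauliTensor n h := by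
  obtain ⟨ε, f, hε, rfl⟩ := hP
  obtain ⟨δ, g, hδ, rfl⟩ := hQ
  obtain ⟨c, h, hc, hm⟩ := pauliTensor_mul f g
  refine ⟨ε * δ * c, h, ?_, ?_⟩
  · rw [mul_pow, mul_pow, hc]
    rcases hε with rfl | rfl <;> rcases hδ with rfl | rfl <;> norm_num
  · rw [smul_mul_smul_comm, hm, smul_smul]

/-- Writing `P * Q = c • t` with `t` a tensor product of Pauli matrices, `(P * Q) ^ 2 = c ^ 2 = ±1`,
and `P`, `Q` are involutions. -/
lemma IsPauli.commute_or_anti {n : ℕ} {P Q : Mat n} (hP : IsPauli n P) (hQ : IsPauli n Q) :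
    Commute P Q ∨ P * Q = -(Q * P) := by
  obtain ⟨c, h, hc, hm⟩ := hP.mul_exists hQ
  have h2 : (P * Q) * (P * Q) = (c ^ 2) • (1 : Mat n) := by
    rw [hm, smul_mul_smul_comm, pauliTensor_mul_self, pow_two]
  have hinv : (P * Q) * (Q * P) = 1 := by
    rw [mul_assoc, ← mul_assoc Q, hQ.mul_self, one_mul, hP.mul_self]
  have hinv' : (Q * P) * (P * Q) = 1 := by
    rw [mul_assoc, ← mul_assoc P, hP.mul_self, one_mul, hQ.mul_self]
  have h3 : P * Q = (c ^ 2) • (Q * P) := by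
    calc P * Q = (Q * P) * ((P * Q) * (P * Q)) := by rw [← mul_assoc, hinv', one_mul]
      _ = _ := by rw [h2, mul_smul_comm, mul_one]
  have hc2 : c ^ 2 = 1 ∨ c ^ 2 = -1 :=
    mul_self_eq_one_iff.mp (by linear_combination hc)
  rcases hc2 with e | e
  · left; rw [e, one_smul] at h3; exact h3
  · right; rw [e, neg_one_smul] at h3; exact h3

lemma IsPauli.mul {n : ℕ} {P Q : Mat n} (hP : IsPauli n P) (hQ : IsPauli n Q)
    (hPQ : Commute P Q) : IsPauli n (P * Q) := by
  obtain ⟨c, h, -, hm⟩ := hP.mul_exists hQ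
  have h1 : (P * Q) * (P * Q) = 1 := by
    rw [hPQ.symm.mul_mul_mul_comm, hP.mul_self, hQ.mul_self, one_mul]
  have h2 : (c * c) • (1 : Mat n) = 1 := by
    rw [hm, smul_mul_smul_comm, pauliTensor_mul_self] at h1
    exact h1
  have h3 := congrFun (congrFun h2 0) 0
  exact ⟨c, h, mul_self_eq_one_iff.mp (by simpa using h3), hm⟩

/-! ### Obstructions to transitivity give contextuality -/

section Trees

variable {n : ℕ}

/-- The tree with root label `a.label * b.label` and the two subtrees `a` and `b`. -/
noncomputable def binNode (a b : PTree n) : PTree n := .node (a.label * b.label) [a, b]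

/-- A valid tree with Pauli root label. -/
def GoodTree (S : Set (Mat n)) (τ : PTree n) : Prop := PTree.Valid S τ ∧ IsPauli n τ.label

lemma goodTree_leaf {S : Set (Mat n)} (hS : ∀ M ∈ S, IsPauli n M) {M : Mat n} (hM : M ∈ S) :
    GoodTree S (.leaf M) := ⟨.leaf hM, hS M hM⟩

lemma goodTree_binNode {S : Set (Mat n)} {a b : PTree n} (ha : GoodTree S a) (hb : GoodTree S b)
    (hab : Commute a.label b.label) : GoodTree S (binNode a b) := by
  refine ⟨.node (ha.2.mul hb.2 hab) (by simp) (by simpa using hab) ?_, ha.2.mul hb.2 hab⟩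
  simp [ha.1, hb.1]

lemma leaves_binNode (a b : PTree n) : (binNode a b).leaves = a.leaves + b.leaves := by
  simp [binNode, PTree.leaves, PTree.leavesList]

lemma label_binNode (a b : PTree n) : (binNode a b).label = a.label * b.label := rfl

lemma contextual_of_trees {S : Set (Mat n)} {τ τ' : PTree n} (h : GoodTree S τ)
    (h' : GoodTree S τ') (hl : τ'.label = -τ.label) (hd : τ.detSet = τ'.detSet) :
    Contextual n S :=
  ⟨τ.label, τ, τ', h.2, ⟨h.1, rfl⟩, ⟨h'.1, hl⟩, hd⟩

lemma label_leaf (M : Mat n) : (PTree.leaf M).label = M := rfl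

lemma mul_self_cancel_left {A : Mat n} (h : A * A = 1) (X : Mat n) : A * (A * X) = X := by
  rw [← mul_assoc, h, one_mul]

/-! The lemmas `swap_left` and `swap_left_neg` serve as rewrite rules sorting right-associated words
in pairwise commuting or anticommuting letters into alphabetical order. -/

lemma swap_left {A B : Mat n} (h : A * B = B * A) (X : Mat n) : B * (A * X) = A * (B * X) := by
  rw [← mul_assoc, ← h, mul_assoc]

lemma swap_left_neg {A B : Mat n} (h : A * B = -(B * A)) (X : Mat n) :
    B * (A * X) = -(A * (B * X)) := by
  rw [← mul_assoc, ← mul_assoc, h, neg_mul, neg_neg]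

/-- The Peres–Mermin square: `(A * B) * (C * D) = -((A * D) * (B * C))`. -/
lemma contextual_of_square {S : Set (Mat n)} (hS : ∀ M ∈ S, IsPauli n M) {A B C D : Mat n}
    (hA : A ∈ S) (hB : B ∈ S) (hC : C ∈ S) (hD : D ∈ S)
    (hAB : A * B = B * A) (hBC : B * C = C * B) (hAC : A * C = -(C * A)) (hBD : B * D = -(D * B))
    (hAD : A * D = D * A) (hCD : C * D = D * C) : Contextual n S := by
  have hCA : C * A = -(A * C) := by rw [hAC, neg_neg]
  have hDB : D * B = -(B * D) := by rw [hBD, neg_neg]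
  have gA := goodTree_leaf hS hA
  have gB := goodTree_leaf hS hB
  have gC := goodTree_leaf hS hC
  have gD := goodTree_leaf hS hD
  have g1 := goodTree_binNode (goodTree_binNode gA gB hAB) (goodTree_binNode gC gD hCD) (by
    simp only [Commute, SemiconjBy, label_binNode, label_leaf, mul_assoc, swap_left hBC,
      swap_left hAD, swap_left_neg hAC, mul_neg, neg_neg, hDB])
  have g2 := goodTree_binNode (goodTree_binNode gA gD hAD) (goodTree_binNode gB gC hBC) (by
    simp only [Commute, SemiconjBy, label_binNode, label_leaf, mul_assoc, swap_left hAB,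
      swap_left_neg hAC, swap_left_neg hBD, mul_neg, ← hCD])
  refine contextual_of_trees g1 g2 ?_ ?_
  · simp only [label_binNode, label_leaf, mul_assoc, swap_left_neg hBD, mul_neg, ← hCD]
  · simp only [PTree.detSet, leaves_binNode, PTree.leaves, Multiset.count_add]
    ext M
    simp only [Set.mem_ofPred_eq]
    ring_nf

/-- Here `(A * B) * (C * (A * D)) = -((B * C) * D)`; the leaf `A` occurs twice in the first tree. -/
lemma contextual_of_path {S : Set (Mat n)} (hS : ∀ M ∈ S, IsPauli n M) {A B C D : Mat n}
    (hA : A ∈ S) (hB : B ∈ S) (hC : C ∈ S) (hD : D ∈ S)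
    (hAB : A * B = B * A) (hBC : B * C = C * B) (hAC : A * C = -(C * A)) (hBD : B * D = -(D * B))
    (hAD : A * D = D * A) (hCD : C * D = -(D * C)) : Contextual n S := by
  have hDB : D * B = -(B * D) := by rw [hBD, neg_neg]
  have hDC : D * C = -(C * D) := by rw [hCD, neg_neg]
  have gA := goodTree_leaf hS hA
  have gB := goodTree_leaf hS hB
  have gC := goodTree_leaf hS hC
  have gD := goodTree_leaf hS hD
  have hAA := mul_self_cancel_left (hS A hA).mul_self
  have g1 := goodTree_binNode (goodTree_binNode gA gB hAB)
    (goodTree_binNode gC (goodTree_binNode gA gD hAD) (by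
      simp only [Commute, SemiconjBy, label_binNode, label_leaf, mul_assoc,
        swap_left_neg hAC, mul_neg, hDC])) (by
    simp only [Commute, SemiconjBy, label_binNode, label_leaf, mul_assoc, swap_left hAB,
      swap_left hBC, swap_left hAD, swap_left_neg hAC, mul_neg, neg_mul, neg_neg, hDB, hAA])
  have g2 := goodTree_binNode (goodTree_binNode gB gC hBC) gD (by
    simp only [Commute, SemiconjBy, label_binNode, label_leaf, mul_assoc,
      swap_left_neg hBD, mul_neg, neg_neg, hDC])
  refine contextual_of_trees g1 g2 ?_ ?_
  · simp only [label_binNode, label_leaf, mul_assoc, swap_left hAB, swap_left_neg hAC, mul_neg,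
      neg_neg, hAA]
  · simp only [PTree.detSet, leaves_binNode, PTree.leaves, Multiset.count_add]
    ext M
    simp only [Set.mem_ofPred_eq, Nat.odd_iff]
    omega

/-- Here `C * ((A * B) * D) = -(A * ((B * C) * D))`. -/
lemma contextual_of_cherry {S : Set (Mat n)} (hS : ∀ M ∈ S, IsPauli n M) {A B C D : Mat n}
    (hA : A ∈ S) (hB : B ∈ S) (hC : C ∈ S) (hD : D ∈ S)
    (hAB : A * B = B * A) (hBC : B * C = C * B) (hAC : A * C = -(C * A)) (hBD : B * D = -(D * B))
    (hAD : A * D = -(D * A)) (hCD : C * D = -(D * C)) : Contextual n S := by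
  have hCA : C * A = -(A * C) := by rw [hAC, neg_neg]
  have hDA : D * A = -(A * D) := by rw [hAD, neg_neg]
  have hDB : D * B = -(B * D) := by rw [hBD, neg_neg]
  have hDC : D * C = -(C * D) := by rw [hCD, neg_neg]
  have gA := goodTree_leaf hS hA
  have gB := goodTree_leaf hS hB
  have gC := goodTree_leaf hS hC
  have gD := goodTree_leaf hS hD
  have g1 := goodTree_binNode gC (goodTree_binNode (goodTree_binNode gA gB hAB) gD (by
      simp only [Commute, SemiconjBy, label_binNode, label_leaf, mul_assoc,
        swap_left_neg hAD, mul_neg, neg_neg, hDB])) (by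
    simp only [Commute, SemiconjBy, label_binNode, label_leaf, mul_assoc,
      swap_left hBC, swap_left_neg hAC, mul_neg, hDC])
  have g2 := goodTree_binNode gA (goodTree_binNode (goodTree_binNode gB gC hBC) gD (by
      simp only [Commute, SemiconjBy, label_binNode, label_leaf, mul_assoc,
        swap_left_neg hBD, mul_neg, neg_neg, hDC])) (by
    simp only [Commute, SemiconjBy, label_binNode, label_leaf, mul_assoc, swap_left hAB,
      swap_left_neg hAC, mul_neg, neg_neg, hDA])
  refine contextual_of_trees g1 g2 ?_ ?_
  · simp only [label_binNode, label_leaf, mul_assoc, swap_left hBC, swap_left_neg hAC, neg_neg]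
  · simp only [PTree.detSet, leaves_binNode, PTree.leaves, Multiset.count_add]
    ext M
    simp only [Set.mem_ofPred_eq, Nat.odd_iff]
    omega

end Trees

/-! ### Factorization through central elements excludes contextuality -/

/-- A product of involutions over a multiset depends only on the parities of the multiplicities. -/
lemma prod_map_eq_of_parity {α G : Type*} [DecidableEq α] [CommMonoid G] (f : α → G)
    (hf : ∀ x, f x * f x = 1) (s t : Multiset α)
    (hst : ∀ x, Odd (s.count x) ↔ Odd (t.count x)) : (s.map f).prod = (t.map f).prod := by
  have hpow : ∀ x k, f x ^ k = if Odd k then f x else 1 := by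
    intro x k
    split_ifs with h
    · obtain ⟨m, rfl⟩ := h
      rw [pow_succ, pow_mul, pow_two, hf, one_pow, one_mul]
    · obtain ⟨m, rfl⟩ := Nat.not_odd_iff_even.mp h
      rw [← two_mul, pow_mul, pow_two, hf, one_pow]
  have key : ∀ u : Multiset α, u.toFinset ⊆ s.toFinset ∪ t.toFinset →
      (u.map f).prod = ∏ x ∈ s.toFinset ∪ t.toFinset, if Odd (u.count x) then f x else 1 := by
    intro u hu
    rw [Finset.prod_multiset_map_count]
    simp only [hpow]
    refine Finset.prod_subset hu fun x _ hx => ?_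
    rw [Multiset.mem_toFinset] at hx
    simp [Multiset.count_eq_zero.mpr hx]
  rw [key s Finset.subset_union_left, key t Finset.subset_union_right]
  simp only [hst]

section Factor

variable {n : ℕ} {N : Submonoid (Mat n)} {R : Set (Mat n)}

/-- Commuting products of operators `z * r`, with `z` a central involution and `r ∈ R`, stay of this
form, and their central parts multiply. -/
lemma factor_list_prod {ι : Type*} (l : ι → Mat n) (z : ι → Submonoid.center N)
    (hz : ∀ i, z i * z i = 1) (hRN : R ⊆ N) (h1 : 1 ∈ R)
    (hRR : ∀ r ∈ R, ∀ r' ∈ R, Commute r r' → r * r' ∈ R) (cs : List ι)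
    (hc : cs.Pairwise fun a b => Commute (l a) (l b))
    (hl : ∀ i ∈ cs, ∃ r ∈ R, l i = (z i : N) * r) :
    ∃ r ∈ R, (cs.map l).prod = ((cs.map z).prod : Submonoid.center N).1.1 * r := by
  induction cs with
  | nil => exact ⟨1, h1, by simp⟩
  | cons a cs ih =>
    rw [List.pairwise_cons] at hc
    obtain ⟨r', hr', e'⟩ := ih hc.2 fun i hi => hl i (List.mem_cons_of_mem _ hi)
    obtain ⟨r, hr, e⟩ := hl a List.mem_cons_self
    have hcomm : Commute (l a) (cs.map l).prod := by
      refine Commute.list_prod_right _ _ fun x hx => ?_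
      obtain ⟨i, hi, rfl⟩ := List.mem_map.mp hx
      exact hc.1 i hi
    set w := (cs.map z).prod with hw
    have hw2 : w * w = 1 := by
      have : ∀ y ∈ cs.map (fun i => z i * z i), y = 1 := by
        intro y hy
        obtain ⟨i, -, rfl⟩ := List.mem_map.mp hy
        exact hz i
      rw [hw, ← List.prod_map_mul]
      exact List.prod_eq_one this
    have cen : ∀ (y : Submonoid.center N) (x : Mat n), x ∈ N → x * y.1.1 = y.1.1 * x := by
      intro y x hx
      exact congrArg Subtype.val (Submonoid.mem_center_iff.mp y.2 ⟨x, hx⟩)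
    have hww : w.1.1 * w.1.1 = 1 := congrArg (fun y : Submonoid.center N => y.1.1) hw2
    have hzz : (z a).1.1 * (z a).1.1 = 1 :=
      congrArg (fun y : Submonoid.center N => y.1.1) (hz a)
    have e1 : l a * (cs.map l).prod = (z a).1.1 * w.1.1 * (r * r') := by
      rw [e, e', mul_assoc, ← mul_assoc r, cen w r (hRN hr)]
      simp only [mul_assoc]
    have e2 : (cs.map l).prod * l a = (z a).1.1 * w.1.1 * (r' * r) := by
      rw [e, e', mul_assoc, ← mul_assoc r', cen (z a) r' (hRN hr'), ← mul_assoc, ← mul_assoc,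
        cen (z a) w.1.1 w.1.2]
      simp only [mul_assoc]
    have hrr : r * r' = r' * r := by
      have h : (z a).1.1 * w.1.1 * (r * r') = (z a).1.1 * w.1.1 * (r' * r) := by
        rw [← e1, ← e2]; exact hcomm
      have h' := congrArg (fun X => w.1.1 * ((z a).1.1 * X)) h
      simpa only [mul_assoc, mul_self_cancel_left hzz, mul_self_cancel_left hww] using h'
    exact ⟨r * r', hRR r hr r' hr' hrr, by rw [List.map_cons, List.prod_cons, e1]; simp [hw]⟩

open scoped Classical in
/-- If every element of `S` factors as a central involution times an element of `R`, then so does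
the root label of every determining tree, with central part the product over its leaves. -/
lemma factor_label {S : Set (Mat n)} (ν : Mat n → Submonoid.center N)
    (hν : ∀ M, ν M * ν M = 1) (hRN : R ⊆ N) (h1 : 1 ∈ R)
    (hRR : ∀ r ∈ R, ∀ r' ∈ R, Commute r r' → r * r' ∈ R)
    (hS : ∀ M ∈ S, ∃ r ∈ R, M = (ν M).1.1 * r) {τ : PTree n} (h : PTree.Valid S τ) :
    ∃ r ∈ R, τ.label = ((τ.leaves.map ν).prod : Submonoid.center N).1.1 * r := by
  induction h with
  | leaf hM => simpa [PTree.leaves, PTree.label] using hS _ hM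
  | @node M cs _ hprod hcomm _ ih =>
    have hz : ∀ c : PTree n, (c.leaves.map ν).prod * (c.leaves.map ν).prod = 1 := by
      intro c
      rw [← Multiset.prod_map_mul]
      simp [hν]
    have hleaves : (((PTree.node M cs).leaves.map ν).prod : Submonoid.center N)
        = (cs.map fun c => (c.leaves.map ν).prod).prod := by
      rw [PTree.leaves]
      clear hprod hcomm ih
      induction cs with
      | nil => simp [PTree.leavesList]
      | cons c cs ih => simp_all [PTree.leavesList]
    rw [hleaves, PTree.label, hprod]
    exact factor_list_prod PTree.label _ hz hRN h1 hRR cs hcomm ih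

/-- Equal determining sets force equal central parts, so roots `A` and `-A` would give elements `r`
and `-r` of `R`. -/
lemma not_contextual_of_factor {S : Set (Mat n)} (ν : Mat n → Submonoid.center N)
    (hν : ∀ M, ν M * ν M = 1) (hRN : R ⊆ N) (h1 : 1 ∈ R)
    (hRR : ∀ r ∈ R, ∀ r' ∈ R, Commute r r' → r * r' ∈ R)
    (hneg : ∀ r ∈ R, -r ∉ R)
    (hS : ∀ M ∈ S, ∃ r ∈ R, M = (ν M).1.1 * r) : ¬ Contextual n S := by
  classical
  rintro ⟨A, τ, τ', -, ⟨hv, hl⟩, ⟨hv', hl'⟩, hd⟩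
  obtain ⟨r, hr, e⟩ := factor_label ν hν hRN h1 hRR hS hv
  obtain ⟨r', hr', e'⟩ := factor_label ν hν hRN h1 hRR hS hv'
  have hp : (τ.leaves.map ν).prod = (τ'.leaves.map ν).prod := by
    refine prod_map_eq_of_parity ν hν _ _ fun M => ?_
    have := Set.ext_iff.mp hd M
    simp only [PTree.detSet, Set.mem_ofPred_eq] at this
    convert this
  set w := (τ'.leaves.map ν).prod with hw
  have hw2 : w * w = 1 := by
    rw [hw, ← Multiset.prod_map_mul]
    simp [hν]
  have hww : w.1.1 * w.1.1 = 1 := congrArg (fun y : Submonoid.center N => y.1.1) hw2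
  rw [hl, hp] at e
  rw [hl', e, ← mul_neg] at e'
  have : -r = r' := by
    have h' := congrArg (fun X => w.1.1 * X) e'
    simpa only [← mul_assoc, hww, one_mul] using h'
  exact hneg r hr (this ▸ hr')

end Factor

/-! ### The two implications -/

lemma equivalence_of_not_contextual {n : ℕ} (S : Finset (Mat n))
    (hS : ∀ M ∈ S, IsPauli n M) (T : Set (Mat n))
    (hT : T = {P | P ∈ (↑S : Set (Mat n)) ∧ ∃ Q ∈ S, Q ≠ P ∧ ¬ Commute P Q})
    (h : ¬ Contextual n (↑S : Set (Mat n))) :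
    Equivalence (fun a b : T => Commute (a : Mat n) (b : Mat n)) := by
  refine ⟨fun _ => Commute.refl _, fun h => h.symm, ?_⟩
  rintro ⟨A, hA⟩ ⟨B, hB⟩ ⟨C, hC⟩ hAB hBC
  by_contra hAC
  simp only at hAB hBC hAC
  subst hT
  obtain ⟨hB, D, hD, -, hBD⟩ := hB
  replace hA := hA.1
  replace hC := hC.1
  have pA := hS A hA
  have pC := hS C hC
  have pD := hS D hD
  have nAC := (pA.commute_or_anti pC).resolve_left hAC
  have nCA : C * A = -(A * C) := by rw [nAC, neg_neg]
  have nBD := ((hS B hB).commute_or_anti pD).resolve_left hBD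
  refine h ?_
  rcases pA.commute_or_anti pD with hAD | hAD <;> rcases pC.commute_or_anti pD with hCD | hCD
  · exact contextual_of_square hS hA hB hC hD hAB hBC nAC nBD hAD hCD
  · exact contextual_of_path hS hA hB hC hD hAB hBC nAC nBD hAD hCD
  · exact contextual_of_path hS hC hB hA hD hBC.symm hAB.symm nCA nBD hCD hAD
  · exact contextual_of_cherry hS hA hB hC hD hAB hBC nAC nBD hAD hCD

/-- The set `R` consists of `1` and one representative `rep a` of each class of `T`; the value `ν a`
is `a * rep a` for `a ∈ T`, and `a` itself for `a ∈ S \ T`. -/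
lemma not_contextual_of_equivalence {n : ℕ} (S : Finset (Mat n))
    (hS : ∀ M ∈ S, IsPauli n M) (T : Set (Mat n))
    (hT : T = {P | P ∈ (↑S : Set (Mat n)) ∧ ∃ Q ∈ S, Q ≠ P ∧ ¬ Commute P Q})
    (h : Equivalence (fun a b : T => Commute (a : Mat n) (b : Mat n))) :
    ¬ Contextual n (↑S : Set (Mat n)) := by
  classical
  have hTS : ∀ a : T, (a : Mat n) ∈ S := fun a => (hT.subset a.2).1
  have hnT : ∀ u ∈ S, u ∉ T → ∀ s ∈ S, Commute u s := by
    intro u hu huT s hs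
    by_contra hc
    refine huT ?_
    rw [hT]
    refine ⟨hu, s, hs, ?_, hc⟩
    rintro rfl
    exact hc (Commute.refl _)
  let sd : Setoid T := ⟨_, h⟩
  let rep : T → T := fun a => Quotient.out (Quotient.mk sd a)
  have rep_comm : ∀ a : T, Commute (a : Mat n) (rep a) := fun a =>
    (Quotient.mk_out (s := sd) a : Commute (rep a : Mat n) a).symm
  have rep_eq : ∀ a b : T, Commute (a : Mat n) b → rep a = rep b := fun a b hab =>
    congrArg Quotient.out (Quotient.sound (s := sd) hab)
  let N : Submonoid (Mat n) := Submonoid.closure (S : Set (Mat n))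
  have hSN : ∀ s ∈ S, s ∈ N := fun s hs => Submonoid.subset_closure hs
  have cenN : ∀ (y : N), (∀ s ∈ S, Commute s (y : Mat n)) → y ∈ Submonoid.center N := by
    intro y hy
    rw [Submonoid.mem_center_iff]
    rintro ⟨x, hx⟩
    refine Subtype.ext ?_
    change Commute x y.1
    induction hx using Submonoid.closure_induction with
    | mem x hx => exact hy x hx
    | one => exact Commute.one_left _
    | mul x x' _ _ hx hx' => exact hx.mul_left hx'
  have hcen : ∀ a : T, ∀ s ∈ S, Commute s ((a : Mat n) * rep a) := by
    intro a s hs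
    by_cases hsT : s ∈ T
    · by_cases hc : Commute s a
      · exact hc.mul_right (h.trans (x := ⟨s, hsT⟩) hc (rep_comm a))
      · have hc' : ¬ Commute s (rep a) := fun hc' =>
          hc (h.trans (x := ⟨s, hsT⟩) hc' (rep_comm a).symm)
        have n1 := ((hS s hs).commute_or_anti (hS a (hTS a))).resolve_left hc
        have n2 := ((hS s hs).commute_or_anti (hS _ (hTS (rep a)))).resolve_left hc'
        change s * (a.1 * (rep a).1) = a.1 * (rep a).1 * s
        rw [← mul_assoc, n1, neg_mul, mul_assoc, n2, mul_neg, neg_neg, mul_assoc]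
    · exact hnT s hs hsT _ (hTS a) |>.mul_right (hnT s hs hsT _ (hTS _))
  let ν : Mat n → Submonoid.center N := fun M =>
    if hM : M ∈ T then
      ⟨⟨M * rep ⟨M, hM⟩, N.mul_mem (hSN _ (hTS ⟨M, hM⟩)) (hSN _ (hTS _))⟩,
        cenN _ (hcen ⟨M, hM⟩)⟩
    else if hM' : M ∈ S then
      ⟨⟨M, hSN _ hM'⟩, cenN _ fun s hs => (hnT M hM' hM s hs).symm⟩
    else 1
  have ν_T : ∀ a : T, (ν a).1.1 = a * rep a := fun a => by simp [ν]
  have ν_S : ∀ M ∈ S, M ∉ T → (ν M).1.1 = M := fun M hM hM' => by simp [ν, hM, hM']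
  have ν_else : ∀ M, M ∉ S → ν M = 1 := fun M hM => by
    have : M ∉ T := fun h' => hM (hTS ⟨M, h'⟩)
    simp [ν, hM, this]
  refine not_contextual_of_factor (N := N) (R := insert 1 (Set.range fun a : T => (rep a : Mat n)))
    ν ?_ ?_ (Set.mem_insert _ _) ?_ ?_ ?_
  · intro M
    by_cases hM : M ∈ S
    · refine Subtype.ext (Subtype.ext ?_)
      change (ν M).1.1 * (ν M).1.1 = 1
      by_cases hMT : M ∈ T
      · rw [ν_T ⟨M, hMT⟩, (rep_comm ⟨M, hMT⟩).symm.mul_mul_mul_comm, (hS M hM).mul_self,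
          (hS _ (hTS _)).mul_self, one_mul]
      · rw [ν_S M hM hMT, (hS M hM).mul_self]
    · rw [ν_else M hM, one_mul]
  · rintro _ (rfl | ⟨a, rfl⟩)
    · exact N.one_mem
    · exact hSN _ (hTS _)
  · rintro _ (rfl | ⟨a, rfl⟩) _ (rfl | ⟨b, rfl⟩) hc
    · simp
    · rw [one_mul]; exact Or.inr ⟨b, rfl⟩
    · rw [mul_one]; exact Or.inr ⟨a, rfl⟩
    · have hab : rep a = rep b :=
        rep_eq a b (h.trans (rep_comm a) (h.trans (y := rep b) hc (rep_comm b).symm))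
      simp only [hab, (hS _ (hTS _)).mul_self]
      exact Set.mem_insert _ _
  · have hrep : ∀ a : T, (rep a : Mat n) ≠ -1 := by
      intro a e
      obtain ⟨-, Q, -, -, hQ⟩ := hT.subset (rep a).2
      rw [e] at hQ
      exact hQ (Commute.one_left _).neg_left
    rintro _ (rfl | ⟨a, rfl⟩) (e | ⟨b, e⟩)
    · exact mat_one_ne_neg_one e.symm
    · exact hrep b e
    · exact hrep a (neg_eq_iff_eq_neg.mp e)
    · simp only at e
      have hc : Commute (rep a : Mat n) (rep b) := by
        rw [e]; exact (Commute.refl _).neg_right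
      have hab : rep a = rep b :=
        rep_eq a b (h.trans (rep_comm a) (h.trans (y := rep b) hc (rep_comm b).symm))
      have h2 : (rep a : Mat n) * rep a = 1 := (hS _ (hTS _)).mul_self
      -- `rep a = -rep a`, so the square `1` of `rep a` equals its own negative.
      refine mat_one_ne_neg_one (n := n) ?_
      rw [← h2]
      nth_rewrite 1 [hab]
      rw [e, neg_mul]
  · intro M hM
    by_cases hMT : M ∈ T
    · refine ⟨_, Or.inr ⟨⟨M, hMT⟩, rfl⟩, ?_⟩
      rw [ν_T ⟨M, hMT⟩, mul_assoc, (hS _ (hTS _)).mul_self, mul_one]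
    · exact ⟨1, Set.mem_insert _ _, by rw [ν_S M hM hMT, mul_one]⟩

/-- Let `T ⊆ S` be obtained by removing from `S` every operator
commuting with all other operators in `S`. Then `S` is noncontextual iff
commutation is an equivalence relation on `T`. -/
theorem noncontextual_iff_commute_equivalence {n : ℕ} (S : Finset (Mat n))
    (hS : ∀ M ∈ S, IsPauli n M) (T : Set (Mat n))
    (hT : T = {P | P ∈ (↑S : Set (Mat n)) ∧ ∃ Q ∈ S, Q ≠ P ∧ ¬ Commute P Q}) :
    ¬ Contextual n (↑S : Set (Mat n)) ↔
      Equivalence (fun a b : T => Commute (a : Mat n) (b : Mat n)) :=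
  ⟨equivalence_of_not_contextual S hS T hT, not_contextual_of_equivalence S hS T hT⟩
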